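/- Let n ≥ 3 be an integer and G(u) = u²/2 - (n/(2n-4)) u^(2-4/n) + 1/(n-2). For each c with 0 < c < 1/(n-2) let a(c), b(c) be the unique reals with 0 < a(c) < 1 < b(c) and G(a(c)) = G(b(c)) = c, and define T(c) = √2 · ∫_{a(c)}^{b(c)} du/√(c - G(u)). Then T(c) tends to π√n as c tends to 0 from the right. -/

import Mathlib

open Real Filter

/-- The antiderivative `G(u) = u²/2 - (n/(2n-4)) u^(2-4/n) + 1/(n-2)` of
`g(u) = u - u^(1-4/n)` vanishing at `u = 1`. -/
noncomputable def derdzG (n : ℕ) (u : ℝ) : ℝ :=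
  u ^ 2 / 2 - ((n : ℝ) / (2 * (n : ℝ) - 4)) * u ^ (2 - 4 / (n : ℝ)) + 1 / ((n : ℝ) - 2)

theorem aux_arcsin (β : ℝ) (hβ : 0 < β) :
    IntervalIntegrable (fun w : ℝ => 1 / √(β ^ 2 - w ^ 2)) MeasureTheory.volume 0 β ∧
    ∫ w in (0:ℝ)..β, 1 / √(β ^ 2 - w ^ 2) = π / 2 := by
  have hc : ContinuousOn (fun w : ℝ => arcsin (w / β)) (Set.Icc 0 β) := by
    apply Continuous.continuousOn
    exact Real.continuous_arcsin.comp (continuous_id.div_const β)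
  have hd : ∀ w ∈ Set.Ioo 0 β,
      HasDerivAt (fun w : ℝ => arcsin (w / β)) (1 / √(β ^ 2 - w ^ 2)) w := by
    intro w hw
    have h1 : w / β < 1 := by rw [div_lt_one hβ]; exact hw.2
    have h0 : 0 < w / β := div_pos hw.1 hβ
    have h := (Real.hasDerivAt_arcsin (x := w / β) (by linarith) h1.ne).comp w
      ((hasDerivAt_id w).div_const β)
    have e : 1 / √(β ^ 2 - w ^ 2) = 1 / √(1 - (w / β) ^ 2) * (1 / β) := by
      have : β ^ 2 - w ^ 2 = β ^ 2 * (1 - (w / β) ^ 2) := by field_simp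
      rw [this, Real.sqrt_mul (by positivity), Real.sqrt_sq hβ.le, one_div_mul_one_div, mul_comm]
    rw [e]
    exact h
  have hi : IntervalIntegrable (fun w : ℝ => 1 / √(β ^ 2 - w ^ 2)) MeasureTheory.volume 0 β := by
    rw [intervalIntegrable_iff_integrableOn_Ioc_of_le hβ.le]
    exact intervalIntegral.integrableOn_deriv_of_nonneg hc hd (fun w _ => by positivity)
  refine ⟨hi, ?_⟩
  rw [intervalIntegral.integral_eq_sub_of_hasDerivAt_of_le hβ.le hc hd hi]
  simp [hβ.ne']

theorem aux_sandwich (φ : ℝ → ℝ) (hφ : Measurable φ) (β m M : ℝ) (hβ : 0 < β) (hm : 0 < m)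
    (hM : 0 < M)
    (h : ∀ w ∈ Set.Ioo 0 β, m * (β ^ 2 - w ^ 2) ≤ φ w ∧ φ w ≤ M * (β ^ 2 - w ^ 2)) :
    IntervalIntegrable (fun w : ℝ => 1 / √(φ w)) MeasureTheory.volume 0 β ∧
    1 / √M * (π / 2) ≤ ∫ w in (0:ℝ)..β, 1 / √(φ w) ∧
    ∫ w in (0:ℝ)..β, 1 / √(φ w) ≤ 1 / √m * (π / 2) := by
  obtain ⟨hi, hv⟩ := aux_arcsin β hβ
  have hb : ∀ w ∈ Set.Ioo 0 β, 1 / √M * (1 / √(β ^ 2 - w ^ 2)) ≤ 1 / √(φ w) ∧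
      1 / √(φ w) ≤ 1 / √m * (1 / √(β ^ 2 - w ^ 2)) := by
    intro w hw
    obtain ⟨h1, h2⟩ := h w hw
    have hp : 0 < β ^ 2 - w ^ 2 := by nlinarith [hw.1, hw.2]
    have hp2 : 0 < φ w := lt_of_lt_of_le (by positivity) h1
    rw [one_div_mul_one_div, one_div_mul_one_div, ← Real.sqrt_mul hM.le, ← Real.sqrt_mul hm.le]
    constructor
    · exact one_div_le_one_div_of_le (Real.sqrt_pos.2 hp2) (Real.sqrt_le_sqrt h2)
    · exact one_div_le_one_div_of_le (Real.sqrt_pos.2 (by positivity)) (Real.sqrt_le_sqrt h1)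
  have hi2 : IntervalIntegrable (fun w : ℝ => 1 / √(φ w)) MeasureTheory.volume 0 β := by
    have hI := hi.const_mul (1 / √m)
    rw [intervalIntegrable_iff_integrableOn_Ioo_of_le hβ.le] at hI ⊢
    refine MeasureTheory.Integrable.mono' hI ?_ ?_
    · exact (measurable_const.div hφ.sqrt).aestronglyMeasurable
    · refine (MeasureTheory.ae_restrict_iff' measurableSet_Ioo).2 (Eventually.of_forall ?_)
      intro w hw
      rw [Real.norm_of_nonneg (by positivity)]
      exact (hb w hw).2
  refine ⟨hi2, ?_, ?_⟩
  · rw [← hv, ← intervalIntegral.integral_const_mul]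
    exact intervalIntegral.integral_mono_on_of_le_Ioo hβ.le (hi.const_mul _) hi2
      (fun w hw => (hb w hw).1)
  · rw [← hv, ← intervalIntegral.integral_const_mul]
    exact intervalIntegral.integral_mono_on_of_le_Ioo hβ.le hi2 (hi.const_mul _)
      (fun w hw => (hb w hw).2)

theorem aux_deriv (n : ℕ) (hn : 3 ≤ n) (u : ℝ) (hu : 0 < u) :
    HasDerivAt (derdzG n) (u - u ^ (1 - 4 / (n : ℝ))) u := by
  have hn' : (3 : ℝ) ≤ n := by exact_mod_cast hn
  have h1 := ((hasDerivAt_id u).pow 2).div_const 2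
  have h2 := (Real.hasDerivAt_rpow_const (x := u) (p := 2 - 4 / (n : ℝ)) (Or.inl hu.ne')).const_mul
    ((n : ℝ) / (2 * (n : ℝ) - 4))
  have h := (h1.sub h2).add_const (1 / ((n : ℝ) - 2))
  have e : u - u ^ (1 - 4 / (n : ℝ)) = (↑2 * id u ^ (2 - 1) * 1) / 2 -
      (n : ℝ) / (2 * (n : ℝ) - 4) * ((2 - 4 / (n : ℝ)) * u ^ (2 - 4 / (n : ℝ) - 1)) := by
    have e1 : 2 - 4 / (n : ℝ) - 1 = 1 - 4 / (n : ℝ) := by ring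
    have e2 : (n : ℝ) / (2 * (n : ℝ) - 4) * (2 - 4 / (n : ℝ)) = 1 := by
      have : 2 * (n : ℝ) - 4 ≠ 0 := by linarith
      have h0 : (n : ℝ) ≠ 0 := by linarith
      have e3 : 2 - 4 / (n : ℝ) = (2 * n - 4) / n := by field_simp
      rw [e3, div_mul_div_comm, mul_comm]
      exact div_self (mul_ne_zero this h0)
    rw [e1, ← mul_assoc, e2]
    simp
  rw [e]
  exact h

theorem aux_one (n : ℕ) (hn : 3 ≤ n) : derdzG n 1 = 0 := by
  have hn' : (3 : ℝ) ≤ n := by exact_mod_cast hn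
  have h1 : (n : ℝ) - 2 ≠ 0 := by linarith
  have h2 : 2 * (n : ℝ) - 4 ≠ 0 := by linarith
  unfold derdzG
  rw [Real.one_rpow]
  have : 2 * (n : ℝ) - 4 = 2 * (n - 2) := by ring
  rw [this]
  field_simp
  ring

theorem aux_g (n : ℕ) (hn : 3 ≤ n) (ε : ℝ) (hε : 0 < ε) :
    ∃ δ, 0 < δ ∧ δ < 1 ∧ ∀ h : ℝ, |h| ≤ δ →
      |(1 + h) - (1 + h) ^ (1 - 4 / (n : ℝ)) - 4 / n * h| ≤ ε * |h| := by
  have hd : HasDerivAt (fun u : ℝ => u - u ^ (1 - 4 / (n : ℝ))) (4 / n) 1 := by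
    have := (hasDerivAt_id (1 : ℝ)).sub
      (Real.hasDerivAt_rpow_const (x := 1) (p := 1 - 4 / (n : ℝ)) (Or.inl one_ne_zero))
    rw [Real.one_rpow] at this
    exact this.congr_deriv (by ring)
  have h := (hasDerivAt_iff_isLittleO_nhds_zero.1 hd).def hε
  obtain ⟨δ, hδ, hb⟩ := Metric.eventually_nhds_iff.1 h
  refine ⟨min (δ / 2) (1 / 2), by positivity, ?_, ?_⟩
  · exact lt_of_le_of_lt (min_le_right _ _) (by norm_num)
  · intro x hx
    have := hb (y := x) (by
      rw [dist_zero_right, Real.norm_eq_abs]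
      have := min_le_left (δ / 2) (1 / 2)
      linarith)
    simp only [Real.one_rpow, sub_self, sub_zero, smul_eq_mul, Real.norm_eq_abs] at this
    rw [mul_comm (4 / (n : ℝ))]
    exact this

theorem aux_quad (n : ℕ) (hn : 3 ≤ n) (s : ℝ) (hs : s = 1 ∨ s = -1) (ε : ℝ) (hε : 0 < ε) :
    ∃ δ, 0 < δ ∧ δ < 1 ∧ ∀ w β : ℝ, 0 ≤ w → w ≤ β → β ≤ δ →
      (4 / n - ε) / 2 * (β ^ 2 - w ^ 2) ≤ derdzG n (1 + s * β) - derdzG n (1 + s * w) ∧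
      derdzG n (1 + s * β) - derdzG n (1 + s * w) ≤ (4 / n + ε) / 2 * (β ^ 2 - w ^ 2) := by
  obtain ⟨δ, h0, h1, hb⟩ := aux_g n hn ε hε
  refine ⟨δ, h0, h1, ?_⟩
  have hss : s * s = 1 := by rcases hs with rfl | rfl <;> norm_num
  have hsa : |s| = 1 := by rcases hs with rfl | rfl <;> norm_num
  have hd : ∀ (κ w : ℝ), 0 ≤ w → w ≤ δ → HasDerivAt
      (fun w => derdzG n (1 + s * w) - κ / 2 * w ^ 2)
      (((1 + s * w) - (1 + s * w) ^ (1 - 4 / (n : ℝ))) * s - κ * w) w := by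
    intro κ w hw hw'
    have hpos : 0 < 1 + s * w := by rcases hs with rfl | rfl <;> linarith
    have i1 : HasDerivAt (fun w : ℝ => 1 + s * w) s w := by
      simpa using ((hasDerivAt_id w).const_mul s).const_add 1
    have i2 := (aux_deriv n hn _ hpos).comp w i1
    have i3 : HasDerivAt (fun w : ℝ => κ / 2 * w ^ 2) (κ * w) w := by
      have := ((hasDerivAt_id w).pow 2).const_mul (κ / 2)
      exact this.congr_deriv (by simp; ring)
    exact i2.sub i3
  have hg : ∀ w, 0 ≤ w → w ≤ δ →
      |((1 + s * w) - (1 + s * w) ^ (1 - 4 / (n : ℝ))) * s - 4 / n * w| ≤ ε * w := by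
    intro w hw hw'
    have hh := hb (s * w) (by rw [abs_mul, hsa, abs_of_nonneg hw]; linarith)
    rw [abs_mul s w, hsa, abs_of_nonneg hw, one_mul] at hh
    have : ((1 + s * w) - (1 + s * w) ^ (1 - 4 / (n : ℝ))) * s - 4 / n * w
      = s * ((1 + s * w) - (1 + s * w) ^ (1 - 4 / (n : ℝ)) - 4 / n * (s * w)) := by
      linear_combination (-4 / n * w) * (1 - hss)
    rw [this, abs_mul, hsa, one_mul]
    exact hh
  have hmono : MonotoneOn (fun w => derdzG n (1 + s * w) - (4 / n - ε) / 2 * w ^ 2)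
      (Set.Icc 0 δ) := by
    refine monotoneOn_of_hasDerivWithinAt_nonneg (convex_Icc _ _)
      (fun w hw => (hd _ w hw.1 hw.2).continuousAt.continuousWithinAt)
      (fun w hw => (hd _ w (interior_subset hw).1 (interior_subset hw).2).hasDerivWithinAt) ?_
    intro w hw
    have hw := interior_subset hw
    have := (abs_le.1 (hg w hw.1 hw.2)).1
    linarith
  have hanti : AntitoneOn (fun w => derdzG n (1 + s * w) - (4 / n + ε) / 2 * w ^ 2)
      (Set.Icc 0 δ) := by
    refine antitoneOn_of_hasDerivWithinAt_nonpos (convex_Icc _ _)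
      (fun w hw => (hd _ w hw.1 hw.2).continuousAt.continuousWithinAt)
      (fun w hw => (hd _ w (interior_subset hw).1 (interior_subset hw).2).hasDerivWithinAt) ?_
    intro w hw
    have hw := interior_subset hw
    have := (abs_le.1 (hg w hw.1 hw.2)).2
    linarith
  intro w β hw hwβ hβ
  have m1 := hmono ⟨hw, hwβ.trans hβ⟩ ⟨hw.trans hwβ, hβ⟩ hwβ
  have m2 := hanti ⟨hw, hwβ.trans hβ⟩ ⟨hw.trans hwβ, hβ⟩ hwβ
  simp only at m1 m2
  constructor <;> linarith

theorem aux_strict (n : ℕ) (hn : 3 ≤ n) :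
    StrictMonoOn (derdzG n) (Set.Ici 1) ∧ StrictAntiOn (derdzG n) (Set.Ioc 0 1) := by
  have hn' : (3 : ℝ) ≤ n := by exact_mod_cast hn
  have hk : 0 < 4 / (n : ℝ) := by positivity
  constructor
  · refine strictMonoOn_of_hasDerivWithinAt_pos (convex_Ici _)
      (fun u hu => (aux_deriv n hn u (lt_of_lt_of_le one_pos hu)).continuousAt.continuousWithinAt)
      (fun u hu => (aux_deriv n hn u
        (lt_of_lt_of_le one_pos (interior_subset hu))).hasDerivWithinAt) ?_
    intro u hu
    rw [interior_Ici] at hu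
    have := Real.rpow_lt_rpow_of_exponent_lt (x := u) hu (show 1 - 4 / (n : ℝ) < 1 by linarith)
    rw [Real.rpow_one] at this
    linarith
  · refine strictAntiOn_of_hasDerivWithinAt_neg (convex_Ioc _ _)
      (fun u hu => (aux_deriv n hn u hu.1).continuousAt.continuousWithinAt)
      (fun u hu => (aux_deriv n hn u (interior_subset hu).1).hasDerivWithinAt) ?_
    intro u hu
    rw [interior_Ioc] at hu
    have := Real.rpow_lt_rpow_of_exponent_gt (x := u) hu.1 hu.2
      (show 1 - 4 / (n : ℝ) < 1 by linarith)
    rw [Real.rpow_one] at this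
    linarith

theorem aux_meas (n : ℕ) : Measurable (derdzG n) := by
  unfold derdzG
  fun_prop

theorem aux_half (n : ℕ) (hn : 3 ≤ n) (s : ℝ) (hs : s = 1 ∨ s = -1) (β : ℝ → ℝ)
    (hpos : ∀ᶠ c in nhdsWithin 0 (Set.Ioi 0), 0 < β c ∧ derdzG n (1 + s * β c) = c)
    (hlim : ∀ δ, 0 < δ → δ < 1 → ∀ᶠ c in nhdsWithin 0 (Set.Ioi 0), β c ≤ δ) :
    (∀ᶠ c in nhdsWithin 0 (Set.Ioi 0),
      IntervalIntegrable (fun w => 1 / √(c - derdzG n (1 + s * w))) MeasureTheory.volume 0 (β c)) ∧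
    Tendsto (fun c => ∫ w in (0:ℝ)..β c, 1 / √(c - derdzG n (1 + s * w)))
      (nhdsWithin 0 (Set.Ioi 0)) (nhds (1 / √((4 / n) / 2) * (π / 2))) := by
  have hn' : (3 : ℝ) ≤ n := by exact_mod_cast hn
  have hk : 0 < 4 / (n : ℝ) := by positivity
  have key : ∀ ε, 0 < ε → ε < 4 / (n : ℝ) → ∀ᶠ c in nhdsWithin 0 (Set.Ioi 0),
      IntervalIntegrable (fun w => 1 / √(c - derdzG n (1 + s * w))) MeasureTheory.volume 0 (β c) ∧
      1 / √((4 / n + ε) / 2) * (π / 2) ≤ ∫ w in (0:ℝ)..β c, 1 / √(c - derdzG n (1 + s * w)) ∧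
      ∫ w in (0:ℝ)..β c, 1 / √(c - derdzG n (1 + s * w)) ≤ 1 / √((4 / n - ε) / 2) * (π / 2) := by
    intro ε h0 h1
    obtain ⟨δ, d0, d1, hq⟩ := aux_quad n hn s hs ε h0
    filter_upwards [hpos, hlim δ d0 d1] with c hc hc2
    refine aux_sandwich _ ?_ _ _ _ hc.1 (by linarith) (by linarith) ?_
    · exact measurable_const.sub ((aux_meas n).comp (by fun_prop))
    · intro w hw
      have := hq w (β c) hw.1.le hw.2.le hc2
      rw [hc.2] at this
      exact this
  refine ⟨(key (4 / n / 2) (by linarith) (by linarith)).mono fun c hc => hc.1, ?_⟩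
  have hs0 : √(4 / (n : ℝ) / 2) ≠ 0 := (Real.sqrt_pos.2 (by positivity)).ne'
  have cont : ∀ t : ℝ, Tendsto (fun ε : ℝ => 1 / √((4 / n + t * ε) / 2) * (π / 2))
      (nhdsWithin 0 (Set.Ioi 0)) (nhds (1 / √((4 / n) / 2) * (π / 2))) := by
    intro t
    have : ContinuousAt (fun ε : ℝ => 1 / √((4 / n + t * ε) / 2) * (π / 2)) 0 := by
      refine ContinuousAt.mul (ContinuousAt.div continuousAt_const ?_ ?_) continuousAt_const
      · fun_prop
      · simpa using hs0
    have h2 := this.tendsto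
    simp only [mul_zero, add_zero] at h2
    exact h2.mono_left nhdsWithin_le_nhds
  have hsmall : ∀ᶠ ε in nhdsWithin (0:ℝ) (Set.Ioi 0), 0 < ε ∧ ε < 4 / (n : ℝ) :=
    Ioo_mem_nhdsGT hk
  rw [tendsto_order]
  constructor
  · intro x hx
    obtain ⟨ε, h1, h2⟩ := (((cont 1).eventually (lt_mem_nhds hx)).and hsmall).exists
    filter_upwards [key ε h2.1 h2.2] with c hc
    rw [one_mul] at h1
    exact lt_of_lt_of_le h1 hc.2.1
  · intro x hx
    obtain ⟨ε, h1, h2⟩ := (((cont (-1)).eventually (gt_mem_nhds hx)).and hsmall).exists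
    filter_upwards [key ε h2.1 h2.2] with c hc
    rw [neg_one_mul, ← sub_eq_add_neg] at h1
    exact lt_of_le_of_lt hc.2.2 h1

/-- The period function
`T(c) = √2 ∫_{a(c)}^{b(c)} du/√(c - G(u))` tends to `π√n` as `c → 0⁺`, where
`0 < a(c) < 1 < b(c)` are determined by `G(a(c)) = G(b(c)) = c`. -/
theorem period_function_limit_at_zero
    (n : ℕ) (hn : 3 ≤ n)
    (a b : ℝ → ℝ)
    (hab : ∀ c : ℝ, 0 < c → c < 1 / ((n : ℝ) - 2) →
      0 < a c ∧ a c < 1 ∧ 1 < b c ∧ derdzG n (a c) = c ∧ derdzG n (b c) = c) :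
    Tendsto (fun c : ℝ => Real.sqrt 2 * ∫ u in a c..b c, 1 / Real.sqrt (c - derdzG n u))
      (nhdsWithin 0 (Set.Ioi 0)) (nhds (π * Real.sqrt (n : ℝ))) := by
  have hn' : (3 : ℝ) ≤ n := by exact_mod_cast hn
  obtain ⟨hmono, hanti⟩ := aux_strict n hn
  have hone := aux_one n hn
  have hE : ∀ᶠ c in nhdsWithin (0:ℝ) (Set.Ioi 0),
      0 < a c ∧ a c < 1 ∧ 1 < b c ∧ derdzG n (a c) = c ∧ derdzG n (b c) = c := by
    have : (0:ℝ) < 1 / ((n : ℝ) - 2) := one_div_pos.2 (by linarith)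
    filter_upwards [Ioo_mem_nhdsGT this] with c hc
    exact hab c hc.1 hc.2
  obtain ⟨iR, tR⟩ := aux_half n hn 1 (Or.inl rfl) (fun c => b c - 1)
    (by
      filter_upwards [hE] with c hc
      refine ⟨by linarith [hc.2.2.1], ?_⟩
      rw [one_mul, add_sub_cancel]; exact hc.2.2.2.2)
    (by
      intro δ h0 h1
      have hp : 0 < derdzG n (1 + δ) := by
        rw [← hone]; exact hmono (by simp) (by simp [h0.le]) (by linarith)
      filter_upwards [hE, Ioo_mem_nhdsGT hp] with c hc hc2
      by_contra hcon
      have := hmono (a := 1 + δ) (b := b c) (by simp [h0.le]) hc.2.2.1.le (by linarith)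
      linarith [hc2.2, hc.2.2.2.2])
  obtain ⟨iL, tL⟩ := aux_half n hn (-1) (Or.inr rfl) (fun c => 1 - a c)
    (by
      filter_upwards [hE] with c hc
      refine ⟨by linarith [hc.2.1], ?_⟩
      rw [show 1 + -1 * (1 - a c) = a c by ring]; exact hc.2.2.2.1)
    (by
      intro δ h0 h1
      have hp : 0 < derdzG n (1 - δ) := by
        rw [← hone]
        exact hanti ⟨by linarith, by linarith⟩ ⟨by norm_num, le_refl _⟩ (by linarith)
      filter_upwards [hE, Ioo_mem_nhdsGT hp] with c hc hc2
      by_contra hcon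
      have := hanti (a := a c) (b := 1 - δ) ⟨hc.1, hc.2.1.le⟩ ⟨by linarith, by linarith⟩
        (by linarith)
      linarith [hc2.2, hc.2.2.2.1])
  have hT := (tL.add tR).const_mul (√2)
  have hval : √2 * (1 / √(4 / (n:ℝ) / 2) * (π / 2) + 1 / √(4 / (n:ℝ) / 2) * (π / 2))
      = π * √(n : ℝ) := by
    have e : (4 / (n:ℝ) / 2) = 2 / n := by ring
    have h2 : √2 ≠ 0 := by positivity
    have h3 : √(n:ℝ) ≠ 0 := (Real.sqrt_pos.2 (by linarith)).ne'
    rw [e, Real.sqrt_div (by norm_num)]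
    field_simp
    ring
  rw [hval] at hT
  refine hT.congr' ?_
  filter_upwards [iL, iR] with c hL hR
  congr 1
  have eL : ∫ w in (0:ℝ)..(1 - a c), 1 / √(c - derdzG n (1 + -1 * w))
      = ∫ u in a c..1, 1 / √(c - derdzG n u) := by
    have := intervalIntegral.integral_comp_sub_left (a := 0) (b := 1 - a c)
      (fun u => 1 / √(c - derdzG n u)) 1
    simp only [sub_zero, sub_sub_cancel] at this
    rw [← this]
    simp only [neg_one_mul, ← sub_eq_add_neg]
  have eR : ∫ w in (0:ℝ)..(b c - 1), 1 / √(c - derdzG n (1 + 1 * w))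
      = ∫ u in (1:ℝ)..b c, 1 / √(c - derdzG n u) := by
    have := intervalIntegral.integral_comp_add_left (a := 0) (b := b c - 1)
      (fun u => 1 / √(c - derdzG n u)) 1
    simp only [add_zero, add_sub_cancel] at this
    rw [← this]
    simp only [one_mul]
  have jL : IntervalIntegrable (fun u => 1 / √(c - derdzG n u)) MeasureTheory.volume (a c) 1 := by
    have := hL.comp_sub_left 1
    simp only [sub_zero, sub_sub_cancel] at this
    convert this.symm using 4
    ring_nf
  have jR : IntervalIntegrable (fun u => 1 / √(c - derdzG n u)) MeasureTheory.volume 1 (b c) := by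
    have := hR.comp_sub_right 1
    simp only [zero_add, sub_add_cancel] at this
    convert this using 4
    ring_nf
  rw [eL, eR]
  exact intervalIntegral.integral_add_adjacent_intervals jL jR
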